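/- Let λ = √((5+√13)/2) and ρ = (−√(λ²−4) + i·√(8−λ²))/2. Then the 3×3 complex matrix with rows r₁ = (√((λ²−4)/(λ²−2)), −1/√3, −√(λ²−2)/λ), r₂ = (ρ/√(λ²−2), −1/√3, √(λ²−2)/(2λ) + i·(λ²−3)/(2λ)), r₃ = (conj(ρ)/√(λ²−2), −1/√3, √(λ²−2)/(2λ) − i·(λ²−3)/(2λ)) is unitary (its rows form an orthonormal basis of ℂ³ with respect to the standard Hermitian inner product). -/

import Mathlib

/-!
The first row of the matrix is real and the other two are conjugate to each other, so every column
has the form `(x, α, conj α)` and the columns have real inner products `x y + 2 Re (conj α β)`.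
Orthonormality therefore amounts to six real equations. The substantial ones come down to `|ρ| = 1`,
`|ζ| = 1 / λ` and `Re (conj ρ ζ) = √(λ² - 4) √(λ² - 2) / (2 λ)`, where `ζ` is the last entry of the
second row. The last of these rests on `(λ² - 3) √(8 - λ²) = 3 √(λ² - 4) √(λ² - 2)`, whose square
follows from `λ⁴ - 5 λ² + 3 = 0`.
-/

namespace AsaedaHaagerupStmt8

noncomputable def lam : ℝ := Real.sqrt ((5 + Real.sqrt 13) / 2)

noncomputable def rho : ℂ :=
  (-Complex.ofReal (Real.sqrt (lam ^ 2 - 4)) +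
    Complex.ofReal (Real.sqrt (8 - lam ^ 2)) * Complex.I) / 2

noncomputable def U : Matrix (Fin 3) (Fin 3) ℂ :=
  !![Complex.ofReal (Real.sqrt ((lam ^ 2 - 4) / (lam ^ 2 - 2))),
       Complex.ofReal (-(1 / Real.sqrt 3)),
       Complex.ofReal (-(Real.sqrt (lam ^ 2 - 2) / lam));
     rho / Complex.ofReal (Real.sqrt (lam ^ 2 - 2)),
       Complex.ofReal (-(1 / Real.sqrt 3)),
       Complex.ofReal (Real.sqrt (lam ^ 2 - 2) / (2 * lam)) +
         Complex.ofReal ((lam ^ 2 - 3) / (2 * lam)) * Complex.I;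
     (starRingEnd ℂ rho) / Complex.ofReal (Real.sqrt (lam ^ 2 - 2)),
       Complex.ofReal (-(1 / Real.sqrt 3)),
       Complex.ofReal (Real.sqrt (lam ^ 2 - 2) / (2 * lam)) -
         Complex.ofReal ((lam ^ 2 - 3) / (2 * lam)) * Complex.I]

open Matrix
open scoped ComplexConjugate

section ConjPaired

variable {𝕜 n : Type*} [RCLike 𝕜]

/-- The three-rowed matrix with real first row `x`, second row `α` and third row the conjugate
of `α`; its columns are the vectors fixed by conjugating and swapping the last two coordinates,
so that their inner products are real. -/
def conjPaired (x : n → ℝ) (α : n → 𝕜) : Matrix (Fin 3) n 𝕜 :=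
  of ![fun j ↦ (x j : 𝕜), α, fun j ↦ conj (α j)]

theorem conjTranspose_mul_conjPaired_apply (x : n → ℝ) (α : n → 𝕜) (i j : n) :
    ((conjPaired x α)ᴴ * conjPaired x α) i j =
      ((x i * x j + 2 * RCLike.re (conj (α i) * α j) : ℝ) : 𝕜) := by
  have add_conj := RCLike.add_conj (conj (α i) * α j)
  rw [map_mul, RCLike.conj_conj] at add_conj
  rw [RCLike.ofReal_add, RCLike.ofReal_mul, RCLike.ofReal_mul, RCLike.ofReal_ofNat, ← add_conj]
  simp [conjPaired, Matrix.mul_apply, Fin.sum_univ_three, add_assoc]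

theorem conjPaired_mem_unitaryGroup_iff (x : Fin 3 → ℝ) (α : Fin 3 → 𝕜) :
    conjPaired x α ∈ unitaryGroup (Fin 3) 𝕜 ↔
      (∀ i, x i ^ 2 + 2 * ‖α i‖ ^ 2 = 1) ∧
        ∀ i j, i < j → x i * x j + 2 * RCLike.re (conj (α i) * α j) = 0 := by
  have gram_diag (i : Fin 3) :
      x i * x i + 2 * RCLike.re (conj (α i) * α i) = x i ^ 2 + 2 * ‖α i‖ ^ 2 := by
    rw [RCLike.conj_mul, ← RCLike.ofReal_pow, RCLike.ofReal_re, sq (x i)]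
  have gram_symm (i j : Fin 3) : x i * x j + 2 * RCLike.re (conj (α i) * α j) =
      x j * x i + 2 * RCLike.re (conj (α j) * α i) := by
    rw [← RCLike.conj_re (conj (α i) * α j), map_mul, RCLike.conj_conj, mul_comm (x i),
      mul_comm (α i)]
  rw [mem_unitaryGroup_iff', star_eq_conjTranspose, ← Matrix.ext_iff]
  simp only [conjTranspose_mul_conjPaired_apply, Matrix.one_apply]
  refine ⟨fun h ↦ ⟨fun i ↦ ?_, fun i j hij ↦ ?_⟩, fun ⟨hdiag, hoff⟩ i j ↦ ?_⟩
  · rw [← gram_diag]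
    exact_mod_cast (h i i).trans (if_pos rfl)
  · exact_mod_cast (h i j).trans (if_neg hij.ne)
  · rcases lt_trichotomy i j with hij | rfl | hij
    · rw [hoff i j hij, if_neg hij.ne, RCLike.ofReal_zero]
    · rw [gram_diag, hdiag, if_pos rfl, RCLike.ofReal_one]
    · rw [gram_symm, hoff j i hij, if_neg hij.ne', RCLike.ofReal_zero]

end ConjPaired

theorem lam_sq : lam ^ 2 = (5 + √13) / 2 := Real.sq_sqrt (by positivity)

theorem lam_pos : 0 < lam := Real.sqrt_pos.mpr (by positivity)

theorem lam_quartic : (lam ^ 2) ^ 2 - 5 * lam ^ 2 + 3 = 0 := by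
  have h13 : √13 ^ 2 = 13 := Real.sq_sqrt (by norm_num)
  rw [lam_sq]
  linear_combination h13 / 4

theorem four_lt_lam_sq : 4 < lam ^ 2 := by
  have : 3 < √13 := Real.lt_sqrt_of_sq_lt (by norm_num)
  rw [lam_sq]
  linarith

theorem lam_sq_lt_eight : lam ^ 2 < 8 := by
  nlinarith [lam_quartic]

theorem sq_sqrt_lam_sq_sub_four : √(lam ^ 2 - 4) ^ 2 = lam ^ 2 - 4 :=
  Real.sq_sqrt (by linarith [four_lt_lam_sq])

theorem sq_sqrt_eight_sub_lam_sq : √(8 - lam ^ 2) ^ 2 = 8 - lam ^ 2 :=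
  Real.sq_sqrt (by linarith [lam_sq_lt_eight])

theorem sq_sqrt_lam_sq_sub_two : √(lam ^ 2 - 2) ^ 2 = lam ^ 2 - 2 :=
  Real.sq_sqrt (by linarith [four_lt_lam_sq])

theorem sqrt_lam_sq_sub_two_pos : 0 < √(lam ^ 2 - 2) :=
  Real.sqrt_pos.mpr (by linarith [four_lt_lam_sq])

theorem lam_sq_sub_three_mul_sqrt :
    (lam ^ 2 - 3) * √(8 - lam ^ 2) = 3 * (√(lam ^ 2 - 4) * √(lam ^ 2 - 2)) := by
  have hpos : 0 ≤ lam ^ 2 - 3 := by linarith [four_lt_lam_sq]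
  rw [← sq_eq_sq₀ (by positivity) (by positivity)]
  simp only [mul_pow, sq_sqrt_lam_sq_sub_four, sq_sqrt_eight_sub_lam_sq, sq_sqrt_lam_sq_sub_two]
  linear_combination -(lam ^ 2) * lam_quartic

theorem rho_re : rho.re = -√(lam ^ 2 - 4) / 2 := by
  simp [rho]

theorem rho_im : rho.im = √(8 - lam ^ 2) / 2 := by
  simp [rho]

theorem norm_rho : ‖rho‖ = 1 := by
  rw [← sq_eq_sq₀ (norm_nonneg _) zero_le_one, Complex.sq_norm, Complex.normSq_apply, rho_re,
    rho_im]
  linear_combination (sq_sqrt_lam_sq_sub_four + sq_sqrt_eight_sub_lam_sq) / 4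

/-- The last entry of the second row of `U`, of modulus `1 / lam`; its conjugate is the last entry
of the third row. -/
noncomputable def zeta : ℂ :=
  (√(lam ^ 2 - 2) / (2 * lam) : ℝ) + ((lam ^ 2 - 3) / (2 * lam) : ℝ) * Complex.I

theorem zeta_re : zeta.re = √(lam ^ 2 - 2) / (2 * lam) := by
  rw [zeta, ← Complex.mk_eq_add_mul_I]

theorem zeta_im : zeta.im = (lam ^ 2 - 3) / (2 * lam) := by
  rw [zeta, ← Complex.mk_eq_add_mul_I]

theorem conj_zeta : conj zeta =
    (√(lam ^ 2 - 2) / (2 * lam) : ℝ) - ((lam ^ 2 - 3) / (2 * lam) : ℝ) * Complex.I := by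
  rw [zeta, map_add, map_mul, Complex.conj_ofReal, Complex.conj_ofReal, Complex.conj_I,
    mul_neg, ← sub_eq_add_neg]

theorem sq_norm_zeta : ‖zeta‖ ^ 2 = 1 / lam ^ 2 := by
  have hlam := lam_pos.ne'
  rw [Complex.sq_norm, Complex.normSq_apply, zeta_re, zeta_im]
  field_simp
  linear_combination sq_sqrt_lam_sq_sub_two + lam_quartic

theorem re_conj_rho_mul_zeta :
    (conj rho * zeta).re = √(lam ^ 2 - 4) * √(lam ^ 2 - 2) / (2 * lam) := by
  have hlam := lam_pos.ne'
  simp only [Complex.mul_re, Complex.conj_re, Complex.conj_im, rho_re, rho_im, zeta_re, zeta_im]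
  field_simp
  linear_combination lam_sq_sub_three_mul_sqrt

/-- The first row of `U`, as a real vector, with the square root of the quotient in its first entry
split so that it shares its denominator with the other entries of that column. -/
noncomputable def realRow : Fin 3 → ℝ :=
  ![√(lam ^ 2 - 4) / √(lam ^ 2 - 2), -(1 / √3), -(√(lam ^ 2 - 2) / lam)]

/-- The second row of `U`, whose conjugate is the third row. -/
noncomputable def complexRow : Fin 3 → ℂ :=
  ![rho / (√(lam ^ 2 - 2) : ℝ), (-(1 / √3) : ℝ), zeta]

theorem U_eq_conjPaired : U = conjPaired realRow complexRow := by
  have hsqrt : √((lam ^ 2 - 4) / (lam ^ 2 - 2)) = √(lam ^ 2 - 4) / √(lam ^ 2 - 2) :=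
    Real.sqrt_div (by linarith [four_lt_lam_sq]) _
  rw [U, hsqrt, ← conj_zeta, ← zeta]
  ext i j
  fin_cases i <;> fin_cases j <;> simp [conjPaired, realRow, complexRow]

theorem sq_norm_column_eq_one (i : Fin 3) : realRow i ^ 2 + 2 * ‖complexRow i‖ ^ 2 = 1 := by
  have hsqrt := sqrt_lam_sq_sub_two_pos.ne'
  have hlam := lam_pos.ne'
  fin_cases i
  · suffices (√(lam ^ 2 - 4) / √(lam ^ 2 - 2)) ^ 2 + 2 * (1 / √(lam ^ 2 - 2)) ^ 2 = 1 by
      simpa [realRow, complexRow, norm_rho] using this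
    field_simp
    linear_combination sq_sqrt_lam_sq_sub_four - sq_sqrt_lam_sq_sub_two
  · suffices (√3 ^ 2)⁻¹ + 2 * (√3 ^ 2)⁻¹ = 1 by simpa [realRow, complexRow] using this
    norm_num
  · suffices (√(lam ^ 2 - 2) / lam) ^ 2 + 2 * (1 / lam ^ 2) = 1 by
      simpa [realRow, complexRow, sq_norm_zeta] using this
    field_simp
    linear_combination sq_sqrt_lam_sq_sub_two

theorem realRow_zero_add_two_mul_re : realRow 0 + 2 * (complexRow 0).re = 0 := by
  simp only [realRow, complexRow, cons_val, Complex.div_ofReal_re, rho_re]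
  ring

theorem realRow_two_add_two_mul_re : realRow 2 + 2 * (complexRow 2).re = 0 := by
  simp only [realRow, complexRow, cons_val, zeta_re]
  ring

theorem complexRow_one : complexRow 1 = realRow 1 := rfl

theorem columns_zero_two_orthogonal :
    realRow 0 * realRow 2 + 2 * (conj (complexRow 0) * complexRow 2).re = 0 := by
  have hsqrt := sqrt_lam_sq_sub_two_pos.ne'
  have hlam := lam_pos.ne'
  have hre : (conj (complexRow 0) * complexRow 2).re =
      (conj rho * zeta).re / √(lam ^ 2 - 2) := by
    simp only [complexRow, cons_val, map_div₀, Complex.conj_ofReal, div_mul_eq_mul_div,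
      Complex.div_ofReal_re]
  rw [hre, re_conj_rho_mul_zeta]
  simp only [realRow, cons_val]
  field_simp
  ring

theorem columns_orthogonal {i j : Fin 3} (hij : i < j) :
    realRow i * realRow j + 2 * (conj (complexRow i) * complexRow j).re = 0 := by
  obtain ⟨rfl, rfl⟩ | ⟨rfl, rfl⟩ | ⟨rfl, rfl⟩ :
      i = 0 ∧ j = 1 ∨ i = 0 ∧ j = 2 ∨ i = 1 ∧ j = 2 := by
    lia
  · rw [complexRow_one, Complex.re_mul_ofReal, Complex.conj_re]
    linear_combination realRow 1 * realRow_zero_add_two_mul_re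
  · exact columns_zero_two_orthogonal
  · rw [complexRow_one, Complex.conj_ofReal, Complex.re_ofReal_mul]
    linear_combination realRow 1 * realRow_two_add_two_mul_re

theorem asaeda_haagerup_stmt8 : U ∈ Matrix.unitaryGroup (Fin 3) ℂ := by
  rw [U_eq_conjPaired, conjPaired_mem_unitaryGroup_iff]
  exact ⟨sq_norm_column_eq_one, fun _ _ ↦ columns_orthogonal⟩

end AsaedaHaagerupStmt8
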